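/- Let p be a prime number, let m ≥ 1 and r ≥ 1 be integers, and let g be a nonnegative integer such that m < p^g and p^g divides r − 1. Then v_p(C(r + m − 1, m − 1)) = v_p(m). -/

import Mathlib

/-!
The residue of `n` modulo `p ^ g` determines `v_p(n)` as soon as that residue is nonzero. If
`k ≤ n % p ^ g`, then each factor of `n (n - 1) ⋯ (n - k + 1) = k! * C(n, k)` has a nonzero
residue, so `v_p(C(n, k))` also depends only on `n` modulo `p ^ g`. Now
`r + m - 1 ≡ m [MOD p ^ g]` and `C(m, m - 1) = m`.
-/

theorem padicValNat_eq_of_modEq_of_not_dvd {p g a b : ℕ} (h : a ≡ b [MOD p ^ g])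
    (ha : ¬ p ^ g ∣ a) : padicValNat p a = padicValNat p b := by
  suffices heq : emultiplicity p a = emultiplicity p b by
    rw [← Nat.toNat_emultiplicity, heq, Nat.toNat_emultiplicity]
  refine emultiplicity_eq_emultiplicity_iff.2 fun i => ?_
  rcases le_total i g with hig | hgi
  · exact h.dvd_iff (pow_dvd_pow p hig)
  · have hb : ¬ p ^ g ∣ b := mt (h.dvd_iff dvd_rfl).2 ha
    exact iff_of_false (mt (pow_dvd_pow p hgi).trans ha) (mt (pow_dvd_pow p hgi).trans hb)

theorem padicValNat_choose_succ_add {p n k : ℕ} [Fact p.Prime] (hk : k < n) :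
    padicValNat p (n.choose (k + 1)) + padicValNat p (k + 1) =
      padicValNat p (n.choose k) + padicValNat p (n - k) := by
  rw [← padicValNat.mul (Nat.choose_ne_zero hk) k.succ_ne_zero, Nat.choose_succ_right_eq,
    padicValNat.mul (Nat.choose_ne_zero hk.le) (Nat.sub_ne_zero_of_lt hk)]

theorem padicValNat_choose_eq_of_modEq {p g a b k : ℕ} [Fact p.Prime] (h : a ≡ b [MOD p ^ g])
    (hk : k ≤ a % p ^ g) : padicValNat p (a.choose k) = padicValNat p (b.choose k) := by
  induction k with
  | zero => simp
  | succ k ih =>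
    have hka : k < a := hk.trans (Nat.mod_le _ _)
    have hkb : k < b := (hk.trans_eq h).trans (Nat.mod_le _ _)
    have hndvd : ¬ p ^ g ∣ a - k := by
      rw [Nat.dvd_iff_mod_eq_zero, ← Nat.mod_sub_of_le (Nat.le_of_succ_le hk)]
      exact Nat.sub_ne_zero_of_lt hk
    have hsub : padicValNat p (a - k) = padicValNat p (b - k) :=
      padicValNat_eq_of_modEq_of_not_dvd (h.sub_right hka.le hkb.le) hndvd
    apply Nat.add_right_cancel (m := padicValNat p (k + 1))
    rw [padicValNat_choose_succ_add hka, padicValNat_choose_succ_add hkb,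
      ih (Nat.le_of_succ_le hk), hsub]

/-- If `p` is prime, `m ≥ 1`, `r ≥ 1`, `g ≥ 0`, `m < p^g`, and `p^g ∣ r - 1`, then
`v_p (C(r + m - 1, m - 1)) = v_p(m)`. -/
theorem padicValNat_choose_add_sub_one (p : ℕ) (hp : p.Prime) (m r : ℕ)
    (hm : 1 ≤ m) (hr : 1 ≤ r) (g : ℕ) (hmg : m < p ^ g) (hdvd : p ^ g ∣ r - 1) :
    padicValNat p ((r + m - 1).choose (m - 1)) = padicValNat p m := by
  have : Fact p.Prime := ⟨hp⟩
  have hmod : m ≡ r + m - 1 [MOD p ^ g] :=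
    (Nat.modEq_iff_dvd' (by omega)).2 (by rwa [show r + m - 1 - m = r - 1 by omega])
  have hle : m - 1 ≤ m % p ^ g := by
    rw [Nat.mod_eq_of_lt hmg]
    exact m.sub_le 1
  calc padicValNat p ((r + m - 1).choose (m - 1))
      = padicValNat p (m.choose (m - 1)) := (padicValNat_choose_eq_of_modEq hmod hle).symm
    _ = padicValNat p m := by rw [Nat.choose_symm hm, Nat.choose_one_right]
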